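/- arXiv:2511.01782 — 2 statements merged into one kernel-verified Lean document; each statement's English description precedes it below -/
import Mathlib

section
/- Let G be the dihedral group of order 30 (the semidirect product of a cyclic group of order 15 by a cyclic group of order 2 whose involution acts by inversion). Then there exists a generalized character χ of G such that χ(x) is a sum of at most two roots of unity for every nonidentity x ∈ G, and there exist nonidentity elements x, y, z ∈ G with χ(x) = 0, χ(y) = 1, and χ(z) = −2. -/
def IsRootOfUnity (z : ℂ) : Prop := ∃ n : ℕ, 0 < n ∧ z ^ n = 1

def IsSumAtMostTwoRootsOfUnity (z : ℂ) : Prop :=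
  z = 0 ∨ IsRootOfUnity z ∨ ∃ u v : ℂ, IsRootOfUnity u ∧ IsRootOfUnity v ∧ z = u + v

/-- A generalized character of a finite group: the difference of the characters of two
finite-dimensional complex representations. -/
def IsGenChar (G : Type) [Group G] (χ : G → ℂ) : Prop :=
  ∃ V W : FDRep ℂ G, ∀ g : G, χ g = V.character g - W.character g

/-!
Let `S₃` act on three points, with permutation character `π`. The generalized character `1 - π`
takes the value `-2` at the identity, `0` at the transpositions and `1` at the three-cycles. Pulled
back along a surjection `G → S₃`, it still takes the values `0` and `1` off the identity, and if the
surjection has a nontrivial kernel it takes the value `-2` off the identity as well. The dihedral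
group of order 30 has such a surjection: reduce its rotations modulo 3 to reach the dihedral group
of order 6, which is the full symmetric group of the vertices of a triangle.
-/

open MulAction Function

section Characters

theorem character_ofMulAction {k G X : Type*} [Field k] [Monoid G] [MulAction G X]
    [Finite X] (g : G) :
    (Representation.ofMulAction k G X).character g = (fixedBy X g).ncard := by
  classical
  have := Fintype.ofFinite X
  rw [Representation.character, LinearMap.trace_eq_matrix_trace k (MonoidAlgebra.basis X k)]
  simp [Matrix.trace, LinearMap.toMatrix_apply, MonoidAlgebra.basis, Finsupp.single_apply,
    fixedBy, ← Set.ncard_coe_finset]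

theorem isGenChar_character_sub_character {G V W : Type} [Group G] [AddCommGroup V] [Module ℂ V]
    [FiniteDimensional ℂ V] [AddCommGroup W] [Module ℂ W] [FiniteDimensional ℂ W]
    (ρ : Representation ℂ G V) (σ : Representation ℂ G W) :
    IsGenChar G (ρ.character - σ.character) :=
  ⟨FDRep.of ρ, FDRep.of σ, fun _ => rfl⟩

theorem IsGenChar.comp {G H : Type} [Group G] [Group H] {χ : H → ℂ} (hχ : IsGenChar H χ)
    (φ : G →* H) : IsGenChar G (χ ∘ φ) := by
  obtain ⟨V, W, h⟩ := hχ
  exact ⟨FDRep.of (V.ρ.comp φ), FDRep.of (W.ρ.comp φ), fun g => h (φ g)⟩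

theorem isGenChar_one_sub_ncard_fixedBy (G X : Type) [Group G] [MulAction G X] [Finite X] :
    IsGenChar G fun g => 1 - (fixedBy X g).ncard := by
  convert isGenChar_character_sub_character (Representation.trivial ℂ G ℂ)
    (Representation.ofMulAction ℂ G X) using 1
  ext g
  rw [Pi.sub_apply, character_ofMulAction]
  simp [Representation.character, Representation.trivial]

end Characters

theorem isSumAtMostTwoRootsOfUnity_one_sub_natCast {n : ℕ} (hn : n ≤ 3) :
    IsSumAtMostTwoRootsOfUnity (1 - n) := by
  have one : IsRootOfUnity 1 := ⟨1, one_pos, one_pow 1⟩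
  have neg_one : IsRootOfUnity (-1) := ⟨2, two_pos, neg_one_sq⟩
  interval_cases n
  · exact .inr (.inl (by simpa using one))
  · exact .inl (by norm_num)
  · exact .inr (.inl (by norm_num [neg_one]))
  · exact .inr (.inr ⟨-1, -1, neg_one, neg_one, by norm_num⟩)

theorem ncard_fixedBy_eq_card_sub_card_support {X : Type*} [Fintype X] [DecidableEq X]
    (σ : Equiv.Perm X) : (fixedBy X σ).ncard = Fintype.card X - σ.support.card := by
  have fixedBy_eq_compl_support : fixedBy X σ = ↑σ.supportᶜ := by ext x; simp
  rw [fixedBy_eq_compl_support, Set.ncard_coe_finset, Finset.card_compl]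

section Dihedral

open DihedralGroup

/-- The homomorphism of dihedral groups induced by a homomorphism `f` of their rotation groups. -/
def dihedralMap {m n : ℕ} (f : ZMod m →+ ZMod n) : DihedralGroup m →* DihedralGroup n where
  toFun
    | r i => r (f i)
    | sr i => sr (f i)
  map_one' := by simp [one_def, -r_zero]
  map_mul' := by rintro (i | i) (j | j) <;> simp

theorem dihedralMap_surjective {m n : ℕ} {f : ZMod m →+ ZMod n} (hf : Surjective f) :
    Surjective (dihedralMap f) := by
  rintro (j | j) <;> obtain ⟨i, rfl⟩ := hf j
  exacts [⟨r i, rfl⟩, ⟨sr i, rfl⟩]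

/-- The action of the dihedral group on the vertices of the regular `n`-gon, labelled by `ZMod n`.
Here `sr i` acts as `x ↦ -i - x`, and not as `x ↦ i - x`, because it is the product `sr 0 * r i`. -/
def dihedralToPerm (n : ℕ) : DihedralGroup n →* Equiv.Perm (ZMod n) where
  toFun
    | r i => Equiv.addRight i
    | sr i => Equiv.subLeft (-i)
  map_one' := by ext x; simp [one_def, -r_zero]
  map_mul' := by
    rintro (i | i) (j | j) <;> ext x <;>
      simp only [r_mul_r, r_mul_sr, sr_mul_r, sr_mul_sr, Equiv.Perm.mul_apply,
        Equiv.coe_addRight, Equiv.subLeft_apply] <;> ring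

theorem dihedralToPerm_injective {n : ℕ} (hn₁ : n ≠ 1) (hn₂ : n ≠ 2) :
    Injective (dihedralToPerm n) := by
  rw [injective_iff_map_eq_one]
  rintro (i | i) h
  · have h₀ : 0 + i = 0 := Equiv.congr_fun h 0
    rw [one_def, ← h₀, zero_add]
  · have h₀ : -i - 0 = 0 := Equiv.congr_fun h 0
    have h₁ : -i - 1 = 1 := Equiv.congr_fun h 1
    have two_eq_zero : ((2 : ℕ) : ZMod n) = 0 := by
      push_cast
      linear_combination h₀ - h₁
    have n_dvd_two := (ZMod.natCast_eq_zero_iff 2 n).mp two_eq_zero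
    rcases (Nat.dvd_prime Nat.prime_two).mp n_dvd_two with h | h <;> contradiction

theorem dihedralToPerm_three_surjective : Surjective (dihedralToPerm 3) :=
  have card_eq : Fintype.card (DihedralGroup 3) = Fintype.card (Equiv.Perm (ZMod 3)) := by
    rw [DihedralGroup.card, Fintype.card_perm, ZMod.card]; rfl
  ((Fintype.bijective_iff_injective_and_card _).mpr
    ⟨dihedralToPerm_injective (by decide) (by decide), card_eq⟩).surjective

theorem exists_dihedral_hom_perm_three_surjective_not_injective {n : ℕ} (h3 : 3 ∣ n) (hn : n ≠ 3) :
    ∃ φ : DihedralGroup n →* Equiv.Perm (ZMod 3), Surjective φ ∧ ¬ Injective φ := by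
  let modThree : ZMod n →+ ZMod 3 := (ZMod.castHom h3 (ZMod 3)).toAddMonoidHom
  have modThree_surjective : Surjective modThree := ZMod.castHom_surjective h3
  have modThree_three : modThree 3 = 0 := map_natCast (ZMod.castHom h3 (ZMod 3)) 3
  have three_ne_zero : ((3 : ℕ) : ZMod n) ≠ 0 := fun h =>
    hn (Nat.dvd_antisymm ((ZMod.natCast_eq_zero_iff 3 n).mp h) h3)
  refine ⟨(dihedralToPerm 3).comp (dihedralMap modThree),
    dihedralToPerm_three_surjective.comp (dihedralMap_surjective modThree_surjective),
    fun hinj => ?_⟩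
  have r_three_eq : dihedralMap modThree (r 3) = dihedralMap modThree (r 0) :=
    congrArg r (modThree_three.trans (map_zero modThree).symm)
  exact three_ne_zero (r.inj (hinj (congrArg (dihedralToPerm 3) r_three_eq)))

end Dihedral

theorem stmt_5_general {G X : Type} [Group G] [Fintype X] (hX : Fintype.card X = 3)
    (φ : G →* Equiv.Perm X) (hsurj : Surjective φ) (hninj : ¬ Injective φ) :
    ∃ χ : G → ℂ, IsGenChar G χ ∧
      (∀ x : G, x ≠ 1 → IsSumAtMostTwoRootsOfUnity (χ x)) ∧
      (∃ x : G, x ≠ 1 ∧ χ x = 0) ∧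
      (∃ y : G, y ≠ 1 ∧ χ y = 1) ∧
      (∃ z : G, z ≠ 1 ∧ χ z = -2) := by
  classical
  obtain ⟨a, b, c, hab, hac, hbc, -⟩ := Finset.card_eq_three.mp (Finset.card_univ.trans hX)
  have threeCycle := Equiv.Perm.isThreeCycle_swap_mul_swap_same hab hac hbc
  have fixed_swap : (fixedBy X (Equiv.swap a b)).ncard = 1 := by
    rw [ncard_fixedBy_eq_card_sub_card_support, Equiv.Perm.card_support_swap hab, hX]
  have fixed_threeCycle : (fixedBy X (Equiv.swap a b * Equiv.swap a c)).ncard = 0 := by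
    rw [ncard_fixedBy_eq_card_sub_card_support, threeCycle.card_support, hX]
  have fixed_one : (fixedBy X (1 : Equiv.Perm X)).ncard = 3 := by
    rw [ncard_fixedBy_eq_card_sub_card_support, Equiv.Perm.card_support_eq_zero.mpr rfl, hX]
  have fixed_le (σ : Equiv.Perm X) : (fixedBy X σ).ncard ≤ 3 := by
    rw [ncard_fixedBy_eq_card_sub_card_support, hX]
    exact Nat.sub_le 3 _
  obtain ⟨x, hx⟩ := hsurj (Equiv.swap a b)
  obtain ⟨y, hy⟩ := hsurj (Equiv.swap a b * Equiv.swap a c)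
  obtain ⟨z, hz, hz1⟩ : ∃ z, φ z = 1 ∧ z ≠ 1 := by
    simpa [injective_iff_map_eq_one] using hninj
  have ne_one {g : G} (hg : φ g ≠ 1) : g ≠ 1 := fun h => hg (h ▸ map_one φ)
  refine ⟨_, (isGenChar_one_sub_ncard_fixedBy (Equiv.Perm X) X).comp φ,
    fun g _ => isSumAtMostTwoRootsOfUnity_one_sub_natCast (fixed_le (φ g)),
    ⟨x, ne_one ?_, ?_⟩, ⟨y, ne_one ?_, ?_⟩, ⟨z, hz1, ?_⟩⟩
  · simpa [hx] using hab
  · simp [hx, fixed_swap]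
  · exact hy ▸ threeCycle.isCycle.ne_one
  · simp [hy, fixed_threeCycle]
  · rw [comp_apply, hz, fixed_one]
    norm_num

theorem stmt_5 :
    ∃ χ : DihedralGroup 15 → ℂ, IsGenChar (DihedralGroup 15) χ ∧
      (∀ x : DihedralGroup 15, x ≠ 1 → IsSumAtMostTwoRootsOfUnity (χ x)) ∧
      (∃ x : DihedralGroup 15, x ≠ 1 ∧ χ x = 0) ∧
      (∃ y : DihedralGroup 15, y ≠ 1 ∧ χ y = 1) ∧
      (∃ z : DihedralGroup 15, z ≠ 1 ∧ χ z = -2) := by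
  obtain ⟨φ, hsurj, hninj⟩ :=
    exists_dihedral_hom_perm_three_surjective_not_injective (n := 15) (by decide) (by decide)
  exact stmt_5_general (ZMod.card 3) φ hsurj hninj
end

section
/- Let G be a finite abelian group and let χ be a generalized character of G whose values on all nonidentity elements are sums of at most two roots of unity. Suppose χ = a·ρ_G + ε·(λ₁ + ⋯ + λ_k) for some integer a, sign ε ∈ {1, −1}, and pairwise distinct irreducible characters λ₁, …, λ_k of G. If k = 6 then |G| ≤ 16, and if k = 7 then |G| ≤ 15. -/
/-!
Let `f = λ₁ + ⋯ + λ_k`. The regular character vanishes off the identity, so there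
`‖f x‖ = ‖χ x‖ ≤ 2`, while `f 1 = k`. By orthogonality of distinct characters,
`k |G| = ∑ x, ‖f x‖² ≤ k² + 4 (|G| - 1)`, that is `(k - 4) |G| ≤ k² - 4`.
-/

lemma IsRootOfUnity.norm_eq_one {z : ℂ} (hz : IsRootOfUnity z) : ‖z‖ = 1 :=
  (isOfFinOrder_iff_pow_eq_one.2 hz).norm_eq_one

lemma IsSumAtMostTwoRootsOfUnity.norm_le_two {z : ℂ} (hz : IsSumAtMostTwoRootsOfUnity z) :
    ‖z‖ ≤ 2 := by
  rcases hz with rfl | hz | ⟨u, v, hu, hv, rfl⟩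
  · simp
  · simp [hz.norm_eq_one]
  · calc
      ‖u + v‖ ≤ ‖u‖ + ‖v‖ := norm_add_le u v
      _ = 2 := by rw [hu.norm_eq_one, hv.norm_eq_one, one_add_one_eq_two]

section LinearCharacters

open Fintype (card)
open scoped ComplexConjugate

variable {𝕜 G ι : Type*} [RCLike 𝕜] [Group G]

lemma norm_character_apply [Finite G] (φ : G →* 𝕜ˣ) (g : G) : ‖(φ g : 𝕜)‖ = 1 :=
  (((Units.coeHom 𝕜).comp φ).isOfFinOrder (isOfFinOrder_of_finite g)).norm_eq_one

variable [Fintype G]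

lemma sum_character_mul_conj_eq_ite (φ ψ : G →* 𝕜ˣ) [Decidable (φ = ψ)] :
    ∑ g, (φ g : 𝕜) * conj (ψ g : 𝕜) = if φ = ψ then (card G : 𝕜) else 0 := by
  have hquotient (g : G) :
      (φ g : 𝕜) * conj (ψ g : 𝕜) = (Units.coeHom 𝕜).comp (φ * ψ⁻¹) g := by
    simp [← RCLike.inv_eq_conj (norm_character_apply ψ g)]
  simp_rw [hquotient]
  split_ifs with h
  · simp [h]
  · refine sum_hom_units_eq_zero _ fun htrivial => h (mul_inv_eq_one.1 ?_)
    ext g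
    exact DFunLike.congr_fun htrivial g

variable [Fintype ι] {lam : ι → (G →* 𝕜ˣ)}

lemma sum_sq_norm_sum_mul_character (hlam : Function.Injective lam) (c : ι → 𝕜) :
    ∑ g, ‖∑ i, c i * (lam i g : 𝕜)‖ ^ 2 = card G * ∑ i, ‖c i‖ ^ 2 := by
  classical
  suffices ((∑ g, ‖∑ i, c i * (lam i g : 𝕜)‖ ^ 2 : ℝ) : 𝕜) =
      ((card G * ∑ i, ‖c i‖ ^ 2 : ℝ) : 𝕜) from RCLike.ofReal_injective this
  push_cast
  calc
    ∑ g, (‖∑ i, c i * (lam i g : 𝕜)‖ : 𝕜) ^ 2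
        = ∑ g, ∑ i, ∑ j, c i * conj (c j) * ((lam i g : 𝕜) * conj (lam j g : 𝕜)) := by
      simp only [← RCLike.mul_conj, map_sum, map_mul, Finset.sum_mul_sum, mul_mul_mul_comm]
    _ = ∑ i, ∑ j, c i * conj (c j) * ∑ g, (lam i g : 𝕜) * conj (lam j g : 𝕜) := by
      simp only [Finset.mul_sum]
      rw [Finset.sum_comm]
      exact Finset.sum_congr rfl fun i _ => Finset.sum_comm
    _ = card G * ∑ i, (‖c i‖ : 𝕜) ^ 2 := by
      simp [sum_character_mul_conj_eq_ite, hlam.eq_iff, RCLike.mul_conj, Finset.mul_sum, mul_comm]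

lemma card_mul_sum_sq_norm_coeff_le (hlam : Function.Injective lam)
    (c : ι → 𝕜) {B : ℝ} (hB : ∀ g, g ≠ 1 → ‖∑ i, c i * (lam i g : 𝕜)‖ ≤ B) :
    card G * ∑ i, ‖c i‖ ^ 2 ≤ ‖∑ i, c i‖ ^ 2 + (card G - 1) * B ^ 2 := by
  classical
  rw [← sum_sq_norm_sum_mul_character hlam c, ← Finset.add_sum_erase _ _ (Finset.mem_univ 1)]
  gcongr
  · simp
  · calc
      ∑ g ∈ Finset.univ.erase 1, ‖∑ i, c i * (lam i g : 𝕜)‖ ^ 2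
          ≤ ∑ _g ∈ Finset.univ.erase (1 : G), B ^ 2 := by
        gcongr with g hg
        exact hB g (Finset.ne_of_mem_erase hg)
      _ = (card G - 1) * B ^ 2 := by
        simp [Finset.card_erase_of_mem, Nat.cast_sub Fintype.card_pos]

theorem stmt_9_general [DecidableEq G] (χ : G → 𝕜) {B : ℝ} (hχ : ∀ x, x ≠ 1 → ‖χ x‖ ≤ B)
    (a ε : 𝕜) (hε : ‖ε‖ = 1) (hlam : Function.Injective lam)
    (hform : ∀ g, χ g = a * (if g = 1 then (card G : 𝕜) else 0) + ε * ∑ i, (lam i g : 𝕜)) :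
    (card ι - B ^ 2) * card G ≤ (card ι : ℝ) ^ 2 - B ^ 2 := by
  have hbound (x : G) (hx : x ≠ 1) : ‖∑ i, ε * (lam i x : 𝕜)‖ ≤ B := by
    simpa [hform, hx, Finset.mul_sum] using hχ x hx
  have hcard : card G * (card ι : ℝ) ≤ (card ι : ℝ) ^ 2 + (card G - 1) * B ^ 2 := by
    simpa [hε] using card_mul_sum_sq_norm_coeff_le hlam (fun _ => ε) hbound
  linarith

end LinearCharacters

theorem stmt_9 {G : Type*} [CommGroup G] [Fintype G] [DecidableEq G]
    (χ : G → ℂ)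
    -- values on nonidentity elements are sums of at most two roots of unity
    (hval : ∀ x : G, x ≠ 1 → IsSumAtMostTwoRootsOfUnity (χ x))
    (k : ℕ) (a ε : ℤ) (hε : ε = 1 ∨ ε = -1)
    (lam : Fin k → (G →* ℂˣ)) (hinj : Function.Injective lam)
    -- χ = a·ρ_G + ε·(λ₁ + ⋯ + λ_k)
    (hform : ∀ g : G, χ g = (a : ℂ) * (if g = 1 then (Fintype.card G : ℂ) else 0)
        + (ε : ℂ) * ∑ i : Fin k, (lam i g : ℂ)) :
    (k = 6 → Fintype.card G ≤ 16) ∧ (k = 7 → Fintype.card G ≤ 15) := by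
  have hcard := stmt_9_general χ (fun x hx => (hval x hx).norm_le_two) a ε
    (by rcases hε with rfl | rfl <;> simp) hinj hform
  constructor <;> rintro rfl <;> rify <;> push_cast [Fintype.card_fin] at hcard <;> linarith
end
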